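/- Generalized difference Mason theorem: Let a_1, …, a_{m+1} ∈ ℂ[z] be relatively prime polynomials with a_1 + ⋯ + a_m = a_{m+1}, such that a_1, …, a_m are linearly independent over ℂ. Then for any κ ∈ ℂ \ {0}, max_{1≤i≤m+1} deg a_i ≤ ∑_{i=1}^{m+1} ñ_κ^{[m−1]}(a_i) − m(m−1)/2, where ñ_κ^{[m−1]}(a_i) = ∑_{w∈ℂ} (ord_w(a_i) − min_{0≤j≤m−1} ord_{w+jκ}(a_i)). -/

import Mathlib

open Polynomial

noncomputable def deltaP (κ : ℂ) (p : ℂ[X]) : ℂ[X] := p.comp (X + C κ) - p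

noncomputable def nTilde (κ : ℂ) (p : ℂ[X]) : ℕ :=
  ∑ᶠ w : ℂ, (p.rootMultiplicity w - min (p.rootMultiplicity w) (p.rootMultiplicity (w + κ)))

noncomputable def radTilde (κ : ℂ) (p : ℂ[X]) : ℂ[X] :=
  ∏ᶠ w : ℂ, (X - C w) ^ (p.rootMultiplicity w - min (p.rootMultiplicity w) (p.rootMultiplicity (w + κ)))

noncomputable def nTildeQ (κ : ℂ) (q : ℕ) (p : ℂ[X]) : ℕ :=
  ∑ᶠ w : ℂ, (p.rootMultiplicity w -
    (Finset.range (q + 1)).inf' (Finset.nonempty_range_iff.mpr (Nat.succ_ne_zero q)) (fun j => p.rootMultiplicity (w + (j : ℂ) * κ)))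

noncomputable def kFac (κ : ℂ) (n : ℕ) (p : ℂ[X]) : ℂ[X] :=
  ∏ j ∈ Finset.range n, p.comp (X + C ((j : ℂ) * κ))

/-!
The Casoratian `W` of `a₁, …, aₘ`, written with iterated differences `Δ_κ ^ j` in place of
derivatives, plays the role of the Wronskian in the classical Mason–Stothers theorem. If `W`
vanished, all the `aᵢ` would solve one difference equation of some order `r < m`. A solution is
determined by its first `r` differences at a point `z` such that the leading coefficient has no zero
on `z, z + κ, z + 2κ, …`, so the solution space has dimension at most `r`, against the independence
of the `aᵢ`.

Up to a unit, `W` does not depend on which of `a₁, …, aₘ₊₁` is left out. Leaving out one of maximal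
degree bounds `deg W` from above, since `Δ_κ ^ j` lowers degrees by at least `j`. For each `w`,
leaving out one that does not vanish at `w` bounds `ord_w W` from below by
`∑ i, min_{j < m} ord_{w + jκ} aᵢ`. The theorem follows on comparing `deg W` with `∑ w, ord_w W`.
-/

section Determinant

variable {R n : Type*} [CommRing R] [Fintype n] [DecidableEq n]

theorem prod_dvd_det {c : n → R} {M : Matrix n n R} (h : ∀ i j, c i ∣ M i j) :
    ∏ i, c i ∣ M.det := by
  choose N hN using h
  rw [show M = Matrix.of fun i j => c i * Matrix.of N i j from Matrix.ext hN,
    Matrix.det_mul_column]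
  exact dvd_mul_right _ _

theorem natDegree_det_le {M : Matrix n n R[X]} {d : n → ℕ} (h : ∀ i j, (M i j).natDegree ≤ d i) :
    M.det.natDegree ≤ ∑ i, d i := by
  rw [Matrix.det_apply']
  refine natDegree_sum_le_of_forall_le _ _ fun σ _ => ?_
  calc (((Equiv.Perm.sign σ : ℤ) : R[X]) * ∏ i, M (σ i) i).natDegree
      ≤ (∏ i, M (σ i) i).natDegree := by
        simpa only [natDegree_intCast, zero_add] using
          natDegree_mul_le (p := ((Equiv.Perm.sign σ : ℤ) : R[X]))
    _ ≤ ∑ i, (M (σ i) i).natDegree := natDegree_prod_le _ _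
    _ ≤ ∑ i, d (σ i) := Finset.sum_le_sum fun i _ => h (σ i) i
    _ = ∑ i, d i := Equiv.sum_comp σ d

theorem degree_det_add_sum_le {M : Matrix n n R[X]} {d w : n → ℕ}
    (h : ∀ i j, (M i j).degree + w j ≤ d i) :
    M.det.degree + (∑ j, w j : ℕ) ≤ (∑ i, d i : ℕ) := by
  nontriviality R
  have hscaled : (Matrix.of fun i j => X ^ w j * M i j).det = M.det * X ^ ∑ j, w j := by
    rw [Matrix.det_mul_row, Finset.prod_pow_eq_pow_sum, mul_comm]
  rw [← degree_mul_X_pow, ← hscaled, ← natDegree_le_iff_degree_le]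
  refine natDegree_det_le fun i j => ?_
  rw [Matrix.of_apply, natDegree_le_iff_degree_le, X_pow_mul, degree_mul_X_pow]
  exact h i j

theorem associated_det_submatrix_succAbove {m : ℕ} {M : Matrix (Fin (m + 1)) (Fin m) R}
    (u : Fin (m + 1) → Rˣ) (hM : ∀ j, ∑ i, u i * M i j = 0) (k l : Fin (m + 1)) :
    Associated (M.submatrix k.succAbove id).det (M.submatrix l.succAbove id).det := by
  set N : Matrix (Fin (m + 1)) (Fin m) R := Matrix.of fun i j => u i * M i j
  have hscaled (k : Fin (m + 1)) :
      Associated (M.submatrix k.succAbove id).det (N.submatrix k.succAbove id).det := by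
    refine ⟨∏ i, u (k.succAbove i), ?_⟩
    rw [mul_comm, Units.coe_prod]
    exact (Matrix.det_mul_column _ _).symm
  have hsign : Associated (N.submatrix l.succAbove id).det (N.submatrix k.succAbove id).det := by
    rw [Matrix.submatrix_succAbove_det_eq_negOnePow_submatrix_succAbove_det N
      (funext fun j => (Finset.sum_apply _ _ _).trans (hM j)) k l]
    exact ⟨Units.map (Int.castRingHom R) (Int.negOnePow (k - l)), by
      simp [Units.smul_def, mul_comm]⟩
  exact (hscaled k).trans (hsign.symm.trans (hscaled l).symm)

end Determinant

section ForwardDifference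

variable {R : Type*} [CommRing R]

/-- The forward difference `p ↦ p (X + κ) - p`, as an endomorphism of `R[X]` so that its iterates
are powers. -/
noncomputable def fwdDiffEnd (κ : R) : Module.End R R[X] := taylor κ - 1

theorem fwdDiffEnd_apply (κ : R) (p : R[X]) : fwdDiffEnd κ p = taylor κ p - p := rfl

theorem eval_fwdDiffEnd (κ x : R) (p : R[X]) :
    (fwdDiffEnd κ p).eval x = p.eval (x + κ) - p.eval x := by
  rw [fwdDiffEnd_apply, eval_sub, taylor_eval]

theorem degree_fwdDiffEnd_add_one_le (κ : R) (p : R[X]) :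
    (fwdDiffEnd κ p).degree + 1 ≤ p.degree := by
  rcases eq_or_ne p 0 with rfl | hp
  · simp
  · refine Nat.WithBot.add_one_le_of_lt ?_
    rw [fwdDiffEnd_apply, ← degree_taylor p κ]
    exact degree_sub_lt_left (degree_taylor p κ) ((taylor_eq_zero κ p).not.mpr hp)
      (leadingCoeff_taylor κ p)

theorem degree_fwdDiffEnd_pow_add_le (κ : R) (p : R[X]) (k : ℕ) :
    ((fwdDiffEnd κ ^ k) p).degree + k ≤ p.degree := by
  induction k generalizing p with
  | zero => simp
  | succ k ih =>
    calc ((fwdDiffEnd κ ^ (k + 1)) p).degree + (k + 1 : ℕ)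
        = ((fwdDiffEnd κ ^ k) (fwdDiffEnd κ p)).degree + k + 1 := by
          rw [pow_succ, Module.End.mul_apply, Nat.cast_add_one, add_assoc]
      _ ≤ (fwdDiffEnd κ p).degree + 1 := by gcongr; exact ih _
      _ ≤ p.degree := degree_fwdDiffEnd_add_one_le κ p

theorem dvd_fwdDiffEnd_pow {κ : R} {d p : R[X]} {k : ℕ}
    (h : ∀ j ≤ k, d ∣ taylor (j * κ) p) : d ∣ (fwdDiffEnd κ ^ k) p := by
  induction k generalizing p with
  | zero => simpa using h 0 le_rfl
  | succ k ih =>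
    rw [pow_succ, Module.End.mul_apply]
    refine ih fun j hj => ?_
    rw [fwdDiffEnd_apply, map_sub, taylor_taylor, ← add_one_mul, ← Nat.cast_add_one]
    exact dvd_sub (h (j + 1) (by lia)) (h j (by lia))

/-- The linear difference operator `f ↦ ∑ j, v j * (fwdDiffEnd κ ^ j) f` with polynomial
coefficients `v`, of order less than `m`. -/
noncomputable def linearDiffOp (κ : R) {m : ℕ} (v : Fin m → R[X]) : Module.End R R[X] :=
  ∑ j, LinearMap.mulLeft R (v j) * fwdDiffEnd κ ^ (j : ℕ)

theorem linearDiffOp_apply (κ : R) {m : ℕ} (v : Fin m → R[X]) (f : R[X]) :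
    linearDiffOp κ v f = ∑ j, v j * (fwdDiffEnd κ ^ (j : ℕ)) f := by
  simp [linearDiffOp]

end ForwardDifference

section SolutionSpace

variable {R : Type*} [CommRing R] [IsDomain R] {κ : R} {m : ℕ} {v : Fin m → R[X]} {r : Fin m}
  {f : R[X]}

theorem eval_fwdDiffEnd_pow_eq_zero_of_linearDiffOp_eq_zero {x : R} (hx : (v r).eval x ≠ 0)
    (hv : ∀ j, r < j → v j = 0) (hf : linearDiffOp κ v f = 0)
    (hlow : ∀ j < r, ((fwdDiffEnd κ ^ (j : ℕ)) f).eval x = 0) :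
    ∀ j ≤ r, ((fwdDiffEnd κ ^ (j : ℕ)) f).eval x = 0 := by
  suffices htop : ((fwdDiffEnd κ ^ (r : ℕ)) f).eval x = 0 from fun j hj =>
    hj.lt_or_eq.elim (hlow j) fun h => h ▸ htop
  have h := congrArg (eval x) hf
  rw [linearDiffOp_apply, eval_finsetSum, Finset.sum_eq_single r, eval_mul, eval_zero] at h
  · exact (mul_eq_zero.mp h).resolve_left hx
  · intro j _ hj
    rcases hj.lt_or_gt with hj | hj
    · rw [eval_mul, hlow j hj, mul_zero]
    · rw [hv j hj, zero_mul, eval_zero]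
  · exact fun h => absurd (Finset.mem_univ r) h

variable [CharZero R]

theorem injective_add_natCast_mul (hκ : κ ≠ 0) (z : R) :
    Function.Injective fun n : ℕ => z + n * κ := fun _ _ h =>
  Nat.cast_injective (mul_right_cancel₀ hκ (add_left_cancel h))

theorem exists_forall_eval_add_natCast_mul_ne_zero (hκ : κ ≠ 0) {p : R[X]} (hp : p ≠ 0) :
    ∃ z : R, ∀ n : ℕ, p.eval (z + n * κ) ≠ 0 := by
  have hfin : {n : ℕ | p.eval (0 + n * κ) = 0}.Finite :=
    (finite_setOfPred_isRoot hp).preimage (injective_add_natCast_mul hκ 0).injOn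
  obtain ⟨N, hN⟩ := hfin.bddAbove
  refine ⟨(N + 1 : ℕ) * κ, fun n hn => ?_⟩
  have : N + 1 + n ≤ N := hN (by
    rw [Set.mem_ofPred_eq, zero_add, Nat.cast_add, add_mul]
    exact hn)
  lia

theorem eq_zero_of_linearDiffOp_eq_zero (hκ : κ ≠ 0) {z : R}
    (hz : ∀ n : ℕ, (v r).eval (z + n * κ) ≠ 0) (hv : ∀ j, r < j → v j = 0)
    (hf : linearDiffOp κ v f = 0)
    (hinit : ∀ j < r, ((fwdDiffEnd κ ^ (j : ℕ)) f).eval z = 0) : f = 0 := by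
  have hvanish (n : ℕ) : ∀ j ≤ r, ((fwdDiffEnd κ ^ (j : ℕ)) f).eval (z + n * κ) = 0 := by
    refine eval_fwdDiffEnd_pow_eq_zero_of_linearDiffOp_eq_zero (hz n) hv hf ?_
    induction n with
    | zero => simpa using hinit
    | succ n ih =>
      intro j hj
      have hle := eval_fwdDiffEnd_pow_eq_zero_of_linearDiffOp_eq_zero (hz n) hv hf ih
      have hstep := eval_fwdDiffEnd κ (z + n * κ) ((fwdDiffEnd κ ^ (j : ℕ)) f)
      rw [← Module.End.mul_apply, ← pow_succ', hle ⟨j + 1, by lia⟩ hj, hle j hj.le, sub_zero]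
        at hstep
      rw [Nat.cast_add_one, add_one_mul, ← add_assoc, ← hstep]
  refine eq_zero_of_infinite_isRoot f (Set.infinite_of_injective_forall_mem
    (injective_add_natCast_mul hκ z) fun n => ?_)
  simpa using hvanish n ⟨0, r.pos⟩ (Nat.zero_le r)

theorem card_le_of_linearIndependent_of_linearDiffOp_eq_zero (hκ : κ ≠ 0) (hvr : v r ≠ 0)
    (hv : ∀ j, r < j → v j = 0) {ι : Type*} [Fintype ι] {b : ι → R[X]}
    (hb : LinearIndependent R b) (hsol : ∀ i, linearDiffOp κ v (b i) = 0) :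
    Fintype.card ι ≤ r := by
  obtain ⟨z, hz⟩ := exists_forall_eval_add_natCast_mul_ne_zero hκ hvr
  let initialValues : R[X] →ₗ[R] (Fin r → R) :=
    LinearMap.pi fun j => leval z ∘ₗ fwdDiffEnd κ ^ (j : ℕ)
  have hspan : Submodule.span R (Set.range b) ≤ (linearDiffOp κ v).ker :=
    Submodule.span_le.mpr (Set.range_subset_iff.mpr hsol)
  have hdisj : Disjoint (Submodule.span R (Set.range b)) initialValues.ker := by
    refine Submodule.disjoint_def.mpr fun f hf hker => ?_
    exact eq_zero_of_linearDiffOp_eq_zero hκ hz hv (hspan hf) fun j hj => congrFun hker ⟨j, hj⟩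
  simpa using (hb.map hdisj).fintype_card_le_finrank

end SolutionSpace

section Multiplicity

variable {R : Type*} [CommRing R]

theorem X_sub_C_pow_rootMultiplicity_dvd_taylor (p : R[X]) (w r : R) :
    (X - C w) ^ p.rootMultiplicity (w + r) ∣ taylor r p := by
  have h := map_dvd (taylorAlgHom r) (pow_rootMultiplicity_dvd p (w + r))
  simpa [taylorAlgHom_apply] using h

/-- The least multiplicity of `p` at the points `w, w + κ, …, w + q * κ`. -/
noncomputable def minShiftMultiplicity (κ : R) (q : ℕ) (w : R) (p : R[X]) : ℕ :=
  (Finset.range (q + 1)).inf' Finset.nonempty_range_add_one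
    fun j => p.rootMultiplicity (w + j * κ)

/-- The number `ñ_κ^{[q]}(p)`, that is `nTildeQ`, over an arbitrary commutative ring. -/
noncomputable def diffRadicalDegree (κ : R) (q : ℕ) (p : R[X]) : ℕ :=
  ∑ᶠ w, (p.rootMultiplicity w - minShiftMultiplicity κ q w p)

theorem minShiftMultiplicity_le (κ : R) {q j : ℕ} (hj : j ≤ q) (w : R) (p : R[X]) :
    minShiftMultiplicity κ q w p ≤ p.rootMultiplicity (w + j * κ) :=
  Finset.inf'_le (fun j : ℕ => p.rootMultiplicity (w + j * κ)) (Finset.mem_range_succ_iff.mpr hj)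

theorem minShiftMultiplicity_le_rootMultiplicity (κ : R) (q : ℕ) (w : R) (p : R[X]) :
    minShiftMultiplicity κ q w p ≤ p.rootMultiplicity w := by
  simpa using minShiftMultiplicity_le κ (Nat.zero_le q) w p

variable [IsDomain R]

theorem support_rootMultiplicity [DecidableEq R] (p : R[X]) :
    (Function.support fun w => p.rootMultiplicity w) = p.roots.toFinset := by
  ext w
  simp [← count_roots]

theorem hasFiniteSupport_rootMultiplicity (p : R[X]) :
    Function.HasFiniteSupport fun w => p.rootMultiplicity w := by
  classical
  rw [Function.HasFiniteSupport, support_rootMultiplicity]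
  exact Finset.finite_toSet _

theorem finsum_rootMultiplicity (p : R[X]) : ∑ᶠ w, p.rootMultiplicity w = p.roots.card := by
  classical
  rw [finsum_eq_sum_of_support_subset _ (support_rootMultiplicity p).subset,
    ← Multiset.toFinset_sum_count_eq]
  simp only [count_roots]

theorem hasFiniteSupport_minShiftMultiplicity (κ : R) (q : ℕ) (p : R[X]) :
    Function.HasFiniteSupport fun w => minShiftMultiplicity κ q w p :=
  (hasFiniteSupport_rootMultiplicity p).subset fun w hw =>
    ((Nat.pos_of_ne_zero hw).trans_le (minShiftMultiplicity_le_rootMultiplicity κ q w p)).ne'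

theorem card_roots_eq_diffRadicalDegree_add_finsum (κ : R) (q : ℕ) (p : R[X]) :
    p.roots.card = diffRadicalDegree κ q p + ∑ᶠ w, minShiftMultiplicity κ q w p := by
  have hfin : Function.HasFiniteSupport fun w =>
      p.rootMultiplicity w - minShiftMultiplicity κ q w p :=
    (hasFiniteSupport_rootMultiplicity p).subset fun w hw =>
      ((Nat.pos_of_ne_zero hw).trans_le (Nat.sub_le _ _)).ne'
  rw [diffRadicalDegree, ← finsum_add_distrib hfin (hasFiniteSupport_minShiftMultiplicity κ q p),
    ← finsum_rootMultiplicity]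
  exact finsum_congr fun w =>
    (Nat.sub_add_cancel (minShiftMultiplicity_le_rootMultiplicity κ q w p)).symm

theorem sum_natDegree_le_of_sum_minShiftMultiplicity_le {ι : Type*} [Fintype ι] {κ : R} {q : ℕ}
    {a : ι → R[X]} {W : R[X]} (hsplit : ∀ i, (a i).Splits)
    (h : ∀ w, ∑ i, minShiftMultiplicity κ q w (a i) ≤ W.rootMultiplicity w) :
    ∑ i, (a i).natDegree ≤ ∑ i, diffRadicalDegree κ q (a i) + W.natDegree := by
  calc ∑ i, (a i).natDegree
      = ∑ i, (diffRadicalDegree κ q (a i) + ∑ᶠ w, minShiftMultiplicity κ q w (a i)) :=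
        Finset.sum_congr rfl fun i _ => by
          rw [(hsplit i).natDegree_eq_card_roots, ← card_roots_eq_diffRadicalDegree_add_finsum]
    _ = ∑ i, diffRadicalDegree κ q (a i) + ∑ᶠ w, ∑ i, minShiftMultiplicity κ q w (a i) := by
        rw [Finset.sum_add_distrib, finsum_sum_comm _ _ fun i _ =>
          hasFiniteSupport_minShiftMultiplicity κ q (a i)]
    _ ≤ ∑ i, diffRadicalDegree κ q (a i) + ∑ᶠ w, W.rootMultiplicity w := by
        gcongr
        exact finsum_le_finsum' (.sum (fun i => hasFiniteSupport_minShiftMultiplicity κ q (a i)) _)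
          (hasFiniteSupport_rootMultiplicity W) h
    _ ≤ ∑ i, diffRadicalDegree κ q (a i) + W.natDegree := by
        rw [finsum_rootMultiplicity]
        gcongr
        exact card_roots' W

end Multiplicity

section Casoratian

variable {R : Type*} [CommRing R] {κ : R} {m : ℕ}

/-- The Casorati matrix of a finite family of polynomials. Its `j`-th column holds the `j`-th
differences rather than the `j`-th shifts, which leaves the determinant unchanged. -/
noncomputable def casoratiMatrix (κ : R) {n : ℕ} (b : Fin m → R[X]) :
    Matrix (Fin m) (Fin n) R[X] :=
  Matrix.of fun i j => (fwdDiffEnd κ ^ (j : ℕ)) (b i)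

/-- The Casoratian of a finite family of polynomials, the difference analogue of the Wronskian. -/
noncomputable def casoratian (κ : R) (b : Fin m → R[X]) : R[X] :=
  (casoratiMatrix κ b).det

theorem casoratian_ne_zero [IsDomain R] [CharZero R] (hκ : κ ≠ 0) {b : Fin m → R[X]}
    (hb : LinearIndependent R b) : casoratian κ b ≠ 0 := by
  intro hdet
  obtain ⟨v, hv, hMv⟩ := Matrix.exists_mulVec_eq_zero_iff.mpr hdet
  obtain ⟨r, hr⟩ :=
    (Function.support v).toFinite.exists_maximal (Function.support_nonempty_iff.mpr hv)
  have hvanish (j : Fin m) (hj : r < j) : v j = 0 := by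
    by_contra hvj
    exact hr.not_prop_of_gt hj hvj
  have hsol (i : Fin m) : linearDiffOp κ v (b i) = 0 := by
    simpa [linearDiffOp_apply, casoratiMatrix, Matrix.mulVec, dotProduct, mul_comm]
      using congrFun hMv i
  have hcard := card_le_of_linearIndependent_of_linearDiffOp_eq_zero hκ hr.prop hvanish hb hsol
  rw [Fintype.card_fin] at hcard
  exact hcard.not_gt r.isLt

theorem natDegree_casoratian_add_le {b : Fin m → R[X]} (hb : casoratian κ b ≠ 0) :
    (casoratian κ b).natDegree + m * (m - 1) / 2 ≤ ∑ i, (b i).natDegree := by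
  have h : (casoratian κ b).degree + (∑ j : Fin m, (j : ℕ) : ℕ) ≤ (∑ i, (b i).natDegree : ℕ) :=
    degree_det_add_sum_le fun i j =>
      (degree_fwdDiffEnd_pow_add_le κ (b i) j).trans degree_le_natDegree
  rw [Fin.sum_univ_eq_sum_range (fun j => j), Finset.sum_range_id, degree_eq_natDegree hb] at h
  exact_mod_cast h

theorem X_sub_C_pow_dvd_casoratian (κ w : R) (b : Fin m → R[X]) :
    (X - C w) ^ ∑ i, minShiftMultiplicity κ (m - 1) w (b i) ∣ casoratian κ b := by
  rw [← Finset.prod_pow_eq_pow_sum]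
  refine prod_dvd_det fun i j => dvd_fwdDiffEnd_pow fun l hl => ?_
  exact (pow_dvd_pow _ (minShiftMultiplicity_le κ (by lia) w _)).trans
    (X_sub_C_pow_rootMultiplicity_dvd_taylor _ _ _)

variable {a : Fin (m + 1) → R[X]}

theorem associated_casoratian_succAbove (κ : R)
    (hsum : ∑ i : Fin m, a i.castSucc = a (Fin.last m)) (k : Fin (m + 1)) :
    Associated (casoratian κ fun i => a (k.succAbove i)) (casoratian κ fun i => a i.castSucc) := by
  have hrel (j : Fin m) : ∑ i, (Fin.snoc (fun _ => 1) (-1) : Fin (m + 1) → R[X]ˣ) i *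
      casoratiMatrix κ a i j = 0 := by
    simp [Fin.sum_univ_castSucc, casoratiMatrix, ← hsum]
  have h := associated_det_submatrix_succAbove _ hrel k (Fin.last m)
  simp only [Fin.succAbove_last] at h
  exact h

theorem natDegree_add_natDegree_casoratian_add_le [IsDomain R]
    (hsum : ∑ i : Fin m, a i.castSucc = a (Fin.last m))
    (hW : casoratian κ (fun i => a i.castSucc) ≠ 0) (k : Fin (m + 1)) :
    (a k).natDegree + ((casoratian κ fun i => a i.castSucc).natDegree + m * (m - 1) / 2) ≤
      ∑ i, (a i).natDegree := by
  have hassoc := associated_casoratian_succAbove κ hsum k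
  rw [Fin.sum_univ_succAbove _ k, ← natDegree_eq_of_degree_eq
    (degree_eq_degree_of_associated hassoc)]
  gcongr
  exact natDegree_casoratian_add_le (hassoc.ne_zero_iff.mpr hW)

theorem sum_minShiftMultiplicity_le_rootMultiplicity_casoratian
    (hsum : ∑ i : Fin m, a i.castSucc = a (Fin.last m))
    (hW : casoratian κ (fun i => a i.castSucc) ≠ 0) {w : R} (hw : ∃ k, ¬ (a k).IsRoot w) :
    ∑ i, minShiftMultiplicity κ (m - 1) w (a i) ≤
      (casoratian κ fun i => a i.castSucc).rootMultiplicity w := by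
  obtain ⟨k, hk⟩ := hw
  have hmin : minShiftMultiplicity κ (m - 1) w (a k) = 0 :=
    Nat.eq_zero_of_le_zero ((minShiftMultiplicity_le_rootMultiplicity κ _ w _).trans_eq
      (rootMultiplicity_eq_zero hk))
  rw [Fin.sum_univ_succAbove _ k, hmin, zero_add, le_rootMultiplicity_iff hW,
    ← (associated_casoratian_succAbove κ hsum k).dvd_iff_dvd_right]
  exact X_sub_C_pow_dvd_casoratian κ w _

end Casoratian

theorem stmt_13_general {R : Type*} [CommRing R] [IsDomain R] [CharZero R] {m : ℕ} {κ : R}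
    (hκ : κ ≠ 0) {a : Fin (m + 1) → R[X]} (hsplit : ∀ i, (a i).Splits)
    (hrp : ∀ d : R[X], (∀ i, d ∣ a i) → IsUnit d)
    (hli : LinearIndependent R (fun i : Fin m => a i.castSucc))
    (hsum : ∑ i : Fin m, a i.castSucc = a (Fin.last m)) :
    (Finset.univ.sup fun i => (a i).natDegree) + m * (m - 1) / 2 ≤
      ∑ i : Fin (m + 1), diffRadicalDegree κ (m - 1) (a i) := by
  have hroot (w : R) : ∃ i, ¬ (a i).IsRoot w := by
    by_contra! h
    exact not_isUnit_X_sub_C w (hrp _ fun i => dvd_iff_isRoot.mpr (h i))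
  have hW := casoratian_ne_zero hκ hli
  have hcount := sum_natDegree_le_of_sum_minShiftMultiplicity_le hsplit fun w =>
    sum_minShiftMultiplicity_le_rootMultiplicity_casoratian hsum hW (hroot w)
  obtain ⟨k, -, hk⟩ := Finset.exists_mem_eq_sup Finset.univ Finset.univ_nonempty
    fun i => (a i).natDegree
  have hdegree := natDegree_add_natDegree_casoratian_add_le hsum hW k
  rw [hk]
  lia

theorem stmt_13 (m : ℕ) (κ : ℂ) (hκ : κ ≠ 0) (a : Fin (m + 1) → ℂ[X])
    (hrp : ∀ d : ℂ[X], (∀ i, d ∣ a i) → IsUnit d)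
    (hli : LinearIndependent ℂ (fun i : Fin m => a i.castSucc))
    (hsum : ∑ i : Fin m, a i.castSucc = a (Fin.last m)) :
    (Finset.univ.sup fun i => (a i).natDegree) + m * (m - 1) / 2 ≤
      ∑ i : Fin (m + 1), nTildeQ κ (m - 1) (a i) :=
  stmt_13_general hκ (fun i => IsAlgClosed.splits (a i)) hrp hli hsum
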